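/- There is a ring homomorphism † : Z(n) → Z(n) determined by †(z_{i,j}) = (−1)^{n(j−i)} z_{n+1−j, n+1−i} for all 1 ≤ i < j ≤ n; it satisfies † ∘ † = id (so † is an involutory ring automorphism), †(z_{1,n}) = z_{1,n}, and z_{1,n} · a = †(a) · z_{1,n} for every a ∈ Z(n). -/

import Mathlib

/-- Index type for the generators `z_{i,j}`, `1 ≤ i < j ≤ n`. -/
abbrev ZIdx (n : ℕ) := {p : ℕ × ℕ // 1 ≤ p.1 ∧ p.1 < p.2 ∧ p.2 ≤ n}

/-- The element `z_{i,j}` of the free algebra, with the conventions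
`z_{a,b} = (-1)^(a-b) z_{b,a}` for `a > b` and `z_{a,a} = 1`. -/
noncomputable def zf (n : ℕ) (i j : ℕ) : FreeAlgebra ℤ (ZIdx n) :=
  if h : 1 ≤ i ∧ i < j ∧ j ≤ n then FreeAlgebra.ι ℤ ⟨(i, j), h⟩
  else if h : 1 ≤ j ∧ j < i ∧ i ≤ n then ((-1 : ℤ) ^ (i - j)) • FreeAlgebra.ι ℤ ⟨(j, i), h⟩
  else if i = j then 1 else 0

/-- The defining relations of the ring `Z(n)`. -/
inductive ZRel (n : ℕ) : FreeAlgebra ℤ (ZIdx n) → FreeAlgebra ℤ (ZIdx n) → Prop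
  | contain (i j i' j' : ℕ) (h1 : 1 ≤ i) (h2 : i < j) (h3 : j ≤ n)
      (h1' : 1 ≤ i') (h2' : i' < j') (h3' : j' ≤ n)
      (hsub : Set.Icc i' j' ⊆ Set.Icc i j) :
      ZRel n (zf n i j * zf n i' j')
        (((-1 : ℤ) ^ ((j - i) * (j' - i'))) • (zf n (i + j - i') (i + j - j') * zf n i j))
  | disj (i j i' j' : ℕ) (h1 : 1 ≤ i) (h2 : i < j) (h3 : j ≤ n)
      (h1' : 1 ≤ i') (h2' : i' < j') (h3' : j' ≤ n)
      (hd : Set.Icc i j ∩ Set.Icc i' j' = ∅) :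
      ZRel n (zf n i j * zf n i' j')
        (((-1 : ℤ) ^ ((j - i) * (j' - i'))) • (zf n i' j' * zf n i j))
  | overlap (i j i' j' : ℕ) (h1 : 1 ≤ i) (h2 : i < j) (h3 : j ≤ n)
      (h1' : 1 ≤ i') (h2' : i' < j') (h3' : j' ≤ n)
      (hne : (Set.Icc i j ∩ Set.Icc i' j').Nonempty)
      (hnc1 : ¬ Set.Icc i' j' ⊆ Set.Icc i j) (hnc2 : ¬ Set.Icc i j ⊆ Set.Icc i' j') :
      ZRel n (zf n i j * zf n i' j') 0

/-- The ring `Z(n)`. -/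
abbrev Zring (n : ℕ) := RingQuot (ZRel n)

/-- The image of the generator `z_{i,j}` in `Z(n)`. -/
noncomputable def zElem (n : ℕ) (i j : ℕ) : Zring n :=
  RingQuot.mkRingHom (ZRel n) (zf n i j)


theorem zf_rev (n i j : ℕ) (h1 : 1 ≤ i) (h2 : i < j) (h3 : j ≤ n) :
    zf n j i = ((-1 : ℤ) ^ (j - i)) • zf n i j := by
  unfold zf
  rw [dif_neg (by omega), dif_pos ⟨h1, h2, h3⟩, dif_pos ⟨h1, h2, h3⟩]

theorem zElem_contain (n i j i' j' : ℕ) (h1 : 1 ≤ i) (h3 : j ≤ n)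
    (h2' : i' < j') (ha : i ≤ i') (hb : j' ≤ j) :
    zElem n i j * zElem n i' j' = ((-1 : ℤ) ^ ((j - i) * (j' - i') + (j' - i'))) •
      (zElem n (i + j - j') (i + j - i') * zElem n i j) := by
  have h := RingQuot.mkRingHom_rel (ZRel.contain (n := n) i j i' j' h1 (by omega) h3 (by omega)
    h2' (by omega) (Set.Icc_subset_Icc ha hb))
  rw [zf_rev n (i + j - j') (i + j - i') (by omega) (by omega) (by omega)] at h
  rw [map_mul, map_zsmul, map_mul, map_zsmul, smul_mul_assoc, smul_smul, ← pow_add,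
    show i + j - i' - (i + j - j') = j' - i' by omega] at h
  exact h

theorem zElem_disj (n i j i' j' : ℕ) (h1 : 1 ≤ i) (h2 : i < j) (h3 : j ≤ n)
    (h1' : 1 ≤ i') (h2' : i' < j') (h3' : j' ≤ n) (hd : j < i' ∨ j' < i) :
    zElem n i j * zElem n i' j' = ((-1 : ℤ) ^ ((j - i) * (j' - i'))) •
      (zElem n i' j' * zElem n i j) := by
  have h := RingQuot.mkRingHom_rel (ZRel.disj (n := n) i j i' j' h1 h2 h3 h1'
    h2' h3' (by
      refine Set.eq_empty_iff_forall_notMem.2 fun x hx => ?_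
      simp only [Set.mem_inter_iff, Set.mem_Icc] at hx; omega))
  rw [map_mul, map_zsmul, map_mul] at h
  exact h

theorem zElem_overlap (n i j i' j' : ℕ) (h1 : 1 ≤ i) (h2 : i < j) (h3 : j ≤ n)
    (h1' : 1 ≤ i') (h2' : i' < j') (h3' : j' ≤ n) (hd : ¬ (j < i' ∨ j' < i))
    (hc : ¬ (i ≤ i' ∧ j' ≤ j)) (hc' : ¬ (i' ≤ i ∧ j ≤ j')) :
    zElem n i j * zElem n i' j' = 0 := by
  have h := RingQuot.mkRingHom_rel (ZRel.overlap (n := n) i j i' j' h1 h2 h3 h1'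
    h2' h3' ⟨max i i', by simp only [Set.mem_inter_iff, Set.mem_Icc]; omega⟩
    (by rw [Set.Icc_subset_Icc_iff h2'.le]; exact hc)
    (by rw [Set.Icc_subset_Icc_iff h2.le]; exact hc'))
  rw [map_mul, map_zero] at h
  exact h

/-- The dagger map on the free algebra. -/
noncomputable def dagFree (n : ℕ) : FreeAlgebra ℤ (ZIdx n) →ₐ[ℤ] Zring n :=
  FreeAlgebra.lift ℤ (fun p : ZIdx n =>
    ((-1 : ℤ) ^ (n * (p.1.2 - p.1.1))) • zElem n (n + 1 - p.1.2) (n + 1 - p.1.1))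

theorem dagFree_zf (n i j : ℕ) (h1 : 1 ≤ i) (h2 : i < j) (h3 : j ≤ n) :
    dagFree n (zf n i j) =
      ((-1 : ℤ) ^ (n * (j - i))) • zElem n (n + 1 - j) (n + 1 - i) := by
  unfold zf dagFree
  rw [dif_pos ⟨h1, h2, h3⟩, FreeAlgebra.lift_ι_apply]

theorem dagFree_rel (n : ℕ) ⦃x y : FreeAlgebra ℤ (ZIdx n)⦄ (h : ZRel n x y) :
    (dagFree n : FreeAlgebra ℤ (ZIdx n) →+* Zring n) x =
    (dagFree n : FreeAlgebra ℤ (ZIdx n) →+* Zring n) y := by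
  simp only [RingHom.coe_coe]
  cases h with
  | contain i j i' j' h1 h2 h3 h1' h2' h3' hsub =>
    rw [Set.Icc_subset_Icc_iff h2'.le] at hsub
    rw [zf_rev n (i + j - j') (i + j - i') (by omega) (by omega) (by omega)]
    rw [map_mul, map_zsmul, map_mul, map_zsmul, dagFree_zf n i j h1 h2 h3,
      dagFree_zf n i' j' h1' h2' h3', dagFree_zf n _ _ (by omega) (by omega) (by omega)]
    simp only [smul_mul_assoc, mul_smul_comm, smul_smul]
    rw [zElem_contain n _ _ _ _ (by omega) (by omega) (by omega) (by omega) (by omega), smul_smul,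
      show i + j - i' - (i + j - j') = j' - i' by omega,
      show n + 1 - i - (n + 1 - j) = j - i by omega,
      show n + 1 - i' - (n + 1 - j') = j' - i' by omega,
      show n + 1 - j + (n + 1 - i) - (n + 1 - i') = n + 1 - (i + j - i') by omega,
      show n + 1 - j + (n + 1 - i) - (n + 1 - j') = n + 1 - (i + j - j') by omega]
    congr 1
    ring
  | disj i j i' j' h1 h2 h3 h1' h2' h3' hd =>
    have hd' : j < i' ∨ j' < i := by
      by_contra hc
      have : max i i' ∈ Set.Icc i j ∩ Set.Icc i' j' := by
        simp only [Set.mem_inter_iff, Set.mem_Icc]; omega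
      rw [hd] at this
      exact this
    rw [map_mul, map_zsmul, map_mul, dagFree_zf n i j h1 h2 h3, dagFree_zf n i' j' h1' h2' h3']
    simp only [smul_mul_assoc, mul_smul_comm, smul_smul]
    rw [zElem_disj n (n + 1 - j) (n + 1 - i) _ _ (by omega) (by omega) (by omega) (by omega)
      (by omega) (by omega) (by omega), smul_smul,
      show n + 1 - i - (n + 1 - j) = j - i by omega,
      show n + 1 - i' - (n + 1 - j') = j' - i' by omega]
    congr 1
    ring
  | overlap i j i' j' h1 h2 h3 h1' h2' h3' hne hnc1 hnc2 =>
    rw [Set.Icc_subset_Icc_iff h2'.le] at hnc1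
    rw [Set.Icc_subset_Icc_iff h2.le] at hnc2
    obtain ⟨x, hx⟩ := hne
    simp only [Set.mem_inter_iff, Set.mem_Icc] at hx
    rw [map_mul, map_zero, dagFree_zf n i j h1 h2 h3, dagFree_zf n i' j' h1' h2' h3']
    rw [smul_mul_assoc, mul_smul_comm, zElem_overlap n _ _ _ _ (by omega) (by omega) (by omega)
      (by omega) (by omega) (by omega) (by omega) (by omega) (by omega), zsmul_zero, zsmul_zero]

/-- The dagger map. -/
noncomputable def dag (n : ℕ) : Zring n →+* Zring n :=
  RingQuot.lift ⟨(dagFree n : FreeAlgebra ℤ (ZIdx n) →+* Zring n), dagFree_rel n⟩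

theorem dag_zElem (n i j : ℕ) (h1 : 1 ≤ i) (h2 : i < j) (h3 : j ≤ n) :
    dag n (zElem n i j) =
      ((-1 : ℤ) ^ (n * (j - i))) • zElem n (n + 1 - j) (n + 1 - i) := by
  unfold dag
  rw [zElem, RingQuot.lift_mkRingHom_apply]
  exact dagFree_zf n i j h1 h2 h3

/-- Induction principle for `Zring`. -/
theorem Zring_ind (n : ℕ) (P : Zring n → Prop) (hz : ∀ k : ℤ, P (k : Zring n))
    (hg : ∀ i j, 1 ≤ i → i < j → j ≤ n → P (zElem n i j))
    (hm : ∀ a b, P a → P b → P (a * b)) (ha : ∀ a b, P a → P b → P (a + b)) (a : Zring n) :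
    P a := by
  obtain ⟨x, rfl⟩ := RingQuot.mkRingHom_surjective (ZRel n) a
  induction x using FreeAlgebra.induction with
  | grade0 k =>
    have := hz k
    rw [← map_intCast (RingQuot.mkRingHom (ZRel n))] at this
    simpa using this
  | grade1 p =>
    obtain ⟨⟨i, j⟩, h⟩ := p
    have := hg i j h.1 h.2.1 h.2.2
    rw [zElem, zf, dif_pos h] at this
    exact this
  | mul a b h1 h2 => rw [map_mul]; exact hm _ _ h1 h2
  | add a b h1 h2 => rw [map_add]; exact ha _ _ h1 h2

/-- There is a ring homomorphism `† : Z(n) → Z(n)` with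
`†(z_{i,j}) = (-1)^(n(j-i)) z_{n+1-j, n+1-i}` for all `1 ≤ i < j ≤ n`; it is an involution,
fixes `z_{1,n}`, and satisfies `z_{1,n} · a = †(a) · z_{1,n}` for all `a`. -/
theorem Zring_dagger_automorphism (n : ℕ) (hn : 2 ≤ n) :
    ∃ f : Zring n →+* Zring n,
      (∀ i j : ℕ, 1 ≤ i → i < j → j ≤ n →
        f (zElem n i j) = ((-1 : ℤ) ^ (n * (j - i))) • zElem n (n + 1 - j) (n + 1 - i)) ∧
      (∀ a : Zring n, f (f a) = a) ∧
      f (zElem n 1 n) = zElem n 1 n ∧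
      (∀ a : Zring n, zElem n 1 n * a = f a * zElem n 1 n) := by
  refine ⟨dag n, dag_zElem n, ?_, ?_, ?_⟩
  · refine Zring_ind n _ (fun k => by simp) ?_ ?_ ?_
    · intro i j h1 h2 h3
      rw [dag_zElem n i j h1 h2 h3, map_zsmul, dag_zElem n _ _ (by omega) (by omega) (by omega),
        smul_smul, show n + 1 - i - (n + 1 - j) = j - i by omega,
        show n + 1 - (n + 1 - i) = i by omega, show n + 1 - (n + 1 - j) = j by omega,
        ← pow_add, Even.neg_one_pow ⟨_, rfl⟩, one_smul]
    · intro a b ha hb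
      rw [map_mul, map_mul, ha, hb]
    · intro a b ha hb
      rw [map_add, map_add, ha, hb]
  · rw [dag_zElem n 1 n le_rfl (by omega) le_rfl, Even.neg_one_pow (Nat.even_mul_pred_self n),
      one_smul, show n + 1 - n = 1 by omega, show n + 1 - 1 = n by omega]
  · refine Zring_ind n _ (fun k => ?_) ?_ ?_ ?_
    · rw [map_intCast]
      exact (Int.cast_commute k _).symm.eq
    · intro i j h1 h2 h3
      rw [dag_zElem n i j h1 h2 h3, zElem_contain n 1 n i j le_rfl le_rfl h2 h1 h3,
        smul_mul_assoc, show 1 + n - j = n + 1 - j by omega, show 1 + n - i = n + 1 - i by omega]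
      congr 2
      obtain ⟨m, rfl⟩ : ∃ m, n = m + 1 := ⟨n - 1, by omega⟩
      rw [Nat.add_sub_cancel]
      ring
    · intro a b ha hb
      rw [map_mul, ← mul_assoc, ha, mul_assoc, hb, mul_assoc]
    · intro a b ha hb
      rw [map_add, mul_add, add_mul, ha, hb]
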